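/- Hardy's theorem, strict case: if f : ℝ → ℂ is measurable and satisfies |f(x)| ≤ C e^{-a x²} and |f̂(y)| ≤ C e^{-b y²} for all x, y ∈ ℝ with a·b > 1/4, then f = 0 almost everywhere. -/

import Mathlib

open MeasureTheory Real Complex

/-!
The Gaussian decay of `f` makes its Fourier transform extend to an entire function `F` with
`F z = O(exp ((im z)² / (4 a)))`. On the positive real axis `F x = O(exp (-b x²))`, and
`1 / (4 a) < b`. For every real `N`, the function `exp ((b - N i) z²) F z` is therefore bounded on
the positive real axis and on each ray close enough to the imaginary axis, hence, by the
Phragmén–Lindelöf principle in a sector of opening less than `π / 2`, on the sector between them,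
with a bound independent of `N`. Letting `N → ∞` shows that `F` vanishes on the open first quadrant,
so `F = 0`, and `f = 0` almost everywhere by injectivity of the Fourier transform.
-/

open Set Filter Asymptotics
open scoped FourierTransform Topology

variable {E : Type*} [NormedAddCommGroup E] [NormedSpace ℂ E]

section GaussianIntegral

lemma exp_neg_mul_sq_add_mul_eq {a : ℝ} (ha : a ≠ 0) (c x : ℝ) :
    Real.exp (-a * x ^ 2 + c * x) =
      Real.exp (-a * (x - c / (2 * a)) ^ 2) * Real.exp (c ^ 2 / (4 * a)) := by
  rw [← Real.exp_add]
  congr 1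
  field

lemma integrable_exp_neg_mul_sq_add_mul {a : ℝ} (ha : 0 < a) (c : ℝ) :
    Integrable fun x : ℝ ↦ Real.exp (-a * x ^ 2 + c * x) := by
  simp_rw [exp_neg_mul_sq_add_mul_eq ha.ne']
  exact ((integrable_exp_neg_mul_sq ha).comp_sub_right (c / (2 * a))).mul_const _

lemma integral_exp_neg_mul_sq_add_mul {a : ℝ} (ha : 0 < a) (c : ℝ) :
    ∫ x : ℝ, Real.exp (-a * x ^ 2 + c * x) = √(π / a) * Real.exp (c ^ 2 / (4 * a)) := by
  simp_rw [exp_neg_mul_sq_add_mul_eq ha.ne', integral_mul_const]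
  rw [integral_sub_right_eq_self fun x : ℝ ↦ Real.exp (-a * x ^ 2), integral_gaussian]

end GaussianIntegral

section FourierLaplace

/-- The Fourier–Laplace transform of `f`: the extension of the Fourier transform, with kernel
`exp (-i x z)` and no normalizing constant, to complex frequencies `z`. -/
noncomputable def fourierLaplace (f : ℝ → E) (z : ℂ) : E :=
  ∫ x : ℝ, Complex.exp (-Complex.I * x * z) • f x

lemma norm_exp_neg_I_mul_mul (x : ℝ) (z : ℂ) :
    ‖Complex.exp (-Complex.I * x * z)‖ = Real.exp (z.im * x) := by
  simp [Complex.norm_exp, mul_comm]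

lemma abs_mul_exp_mul_le {y R : ℝ} (hR : |y| + 1 ≤ R) (x : ℝ) :
    |x| * Real.exp (y * x) ≤ Real.exp (R * x) + Real.exp (-R * x) :=
  calc |x| * Real.exp (y * x)
      ≤ Real.exp |x| * Real.exp |y * x| := by
        gcongr
        · linarith [Real.add_one_le_exp |x|]
        · exact le_abs_self _
    _ = Real.exp ((|y| + 1) * |x|) := by
        rw [← Real.exp_add, abs_mul]
        ring_nf
    _ ≤ Real.exp |R * x| := by
        rw [abs_mul]
        gcongr
        exact hR.trans (le_abs_self R)
    _ ≤ Real.exp (R * x) + Real.exp (-R * x) := by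
        rw [neg_mul]
        exact Real.exp_abs_le _

variable {f : ℝ → E}

lemma differentiable_fourierLaplace (hf : ∀ c : ℝ, Integrable fun x ↦ Real.exp (c * x) • f x) :
    Differentiable ℂ (fourierLaplace f) := by
  intro z₀
  have hfm : AEStronglyMeasurable f := by simpa using (hf 0).aestronglyMeasurable
  have hint : Integrable fun x : ℝ ↦ Complex.exp (-Complex.I * x * z₀) • f x := by
    refine (hf z₀.im).mono (by fun_prop) (.of_forall fun x ↦ ?_)
    simp only [norm_smul, norm_exp_neg_I_mul_mul, Real.norm_eq_abs, Real.abs_exp, le_refl]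
  set R : ℝ := |z₀.im| + 2
  have hderiv_le (x : ℝ) (z : ℂ) (hz : z ∈ Metric.ball z₀ 1) :
      ‖(Complex.exp (-Complex.I * x * z) * (-Complex.I * x)) • f x‖ ≤
        ‖Real.exp (R * x) • f x‖ + ‖Real.exp (-R * x) • f x‖ := by
    have him : |z.im - z₀.im| ≤ 1 := (abs_im_le_norm (z - z₀)).trans (mem_ball_iff_norm.1 hz).le
    have hz_im : |z.im| + 1 ≤ R := by linarith [abs_sub_abs_le_abs_sub z.im z₀.im]
    have hkernel : ‖Complex.exp (-Complex.I * x * z) * (-Complex.I * x)‖ =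
        |x| * Real.exp (z.im * x) := by
      rw [norm_mul, norm_exp_neg_I_mul_mul, mul_comm]
      simp
    simp only [norm_smul, Real.norm_eq_abs, Real.abs_exp, ← add_mul, hkernel]
    gcongr
    exact abs_mul_exp_mul_le hz_im x
  have hderiv (x : ℝ) (z : ℂ) : HasDerivAt (fun z ↦ Complex.exp (-Complex.I * x * z) • f x)
      ((Complex.exp (-Complex.I * x * z) * (-Complex.I * x)) • f x) z := by
    simpa using (((hasDerivAt_id z).const_mul (-Complex.I * x)).cexp.smul_const (f x))
  exact (hasDerivAt_integral_of_dominated_loc_of_deriv_le (Metric.ball_mem_nhds z₀ one_pos)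
    (.of_forall fun z ↦ by fun_prop) hint (by fun_prop) (.of_forall hderiv_le)
    ((hf R).norm.add (hf (-R)).norm)
    (.of_forall fun x z _ ↦ hderiv x z)).2.differentiableAt

variable {a : ℝ}

lemma integrable_exp_mul_smul_of_isBigO (hf : AEStronglyMeasurable f) (ha : 0 < a)
    (hdecay : f =O[ae volume] fun x ↦ Real.exp (-a * x ^ 2)) (c : ℝ) :
    Integrable fun x ↦ Real.exp (c * x) • f x := by
  have hbigO : (fun x ↦ Real.exp (c * x) • f x) =O[ae volume]
      fun x ↦ Real.exp (-a * x ^ 2 + c * x) := by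
    simpa only [Real.exp_add, smul_eq_mul, mul_comm] using
      (isBigO_refl (fun x ↦ Real.exp (c * x)) (ae volume)).smul hdecay
  obtain ⟨C, hC⟩ := hbigO.bound
  exact ((integrable_exp_neg_mul_sq_add_mul ha c).norm.const_mul C).mono' (by fun_prop) hC

lemma isBigO_fourierLaplace (ha : 0 < a)
    (hdecay : f =O[ae volume] fun x ↦ Real.exp (-a * x ^ 2)) :
    fourierLaplace f =O[⊤] fun z ↦ Real.exp (1 / (4 * a) * z.im ^ 2) := by
  obtain ⟨C, hC⟩ := hdecay.bound
  refine .of_bound (C * √(π / a)) (.of_forall fun z ↦ ?_)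
  have hbound : ∀ᵐ x : ℝ, ‖Complex.exp (-Complex.I * x * z) • f x‖ ≤
      C * Real.exp (-a * x ^ 2 + z.im * x) := by
    filter_upwards [hC] with x hx
    rw [Real.norm_eq_abs, Real.abs_exp] at hx
    calc ‖Complex.exp (-Complex.I * x * z) • f x‖
        = Real.exp (z.im * x) * ‖f x‖ := by rw [norm_smul, norm_exp_neg_I_mul_mul]
      _ ≤ Real.exp (z.im * x) * (C * Real.exp (-a * x ^ 2)) := by gcongr
      _ = C * Real.exp (-a * x ^ 2 + z.im * x) := by rw [Real.exp_add]; ring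
  calc ‖fourierLaplace f z‖
      ≤ ∫ x : ℝ, C * Real.exp (-a * x ^ 2 + z.im * x) :=
        norm_integral_le_of_norm_le ((integrable_exp_neg_mul_sq_add_mul ha _).const_mul C) hbound
    _ = C * √(π / a) * ‖Real.exp (1 / (4 * a) * z.im ^ 2)‖ := by
        rw [integral_const_mul, integral_exp_neg_mul_sq_add_mul ha, mul_assoc,
          div_mul_eq_mul_div, one_mul, Real.norm_eq_abs, Real.abs_exp]

lemma fourier_eq_fourierLaplace (f : ℝ → E) (y : ℝ) :
    𝓕 f y = fourierLaplace f (2 * π * y) := by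
  rw [Real.fourier_eq', fourierLaplace]
  congr! 3 with x
  simp only [RCLike.inner_apply, conj_trivial, ofReal_mul, ofReal_neg, ofReal_ofNat]
  ring_nf

end FourierLaplace

section PhragmenLindelof

lemma norm_le_on_sector {F : ℂ → E} {θ B c C : ℝ} (hθ : θ ≤ π)
    (hF : DiffContOnCl ℂ F {z | arg z ∈ Ioo 0 θ}) (hc₀ : 0 ≤ c) (hc : c < π / θ)
    (hgrowth : F =O[𝓟 {z | arg z ∈ Ioo 0 θ}] fun z ↦ Real.exp (B * ‖z‖ ^ c))
    (hzero : ∀ r : ℝ, 0 ≤ r → ‖F r‖ ≤ C)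
    (hangle : ∀ r : ℝ, 0 ≤ r → ‖F (r * Complex.exp (θ * Complex.I))‖ ≤ C)
    {z : ℂ} (hz : arg z ∈ Icc 0 θ) : ‖F z‖ ≤ C := by
  obtain rfl | hz₀ := eq_or_ne z 0
  · exact_mod_cast hzero 0 le_rfl
  have hmaps : MapsTo Complex.exp (im ⁻¹' Ioo 0 θ) {z | arg z ∈ Ioo 0 θ} := fun w hw ↦ by
    rwa [mem_ofPred_eq, ← log_im, log_exp (by linarith [pi_pos, hw.1]) (hw.2.le.trans hθ)]
  have hbound : ‖(F ∘ Complex.exp) (Complex.log z)‖ ≤ C := by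
    refine PhragmenLindelof.horizontal_strip (hF.comp differentiable_exp.diffContOnCl hmaps)
      ⟨c, by rwa [sub_zero], |B|, ?_⟩ (fun w hw ↦ ?_) (fun w hw ↦ ?_)
      (hz.1.trans_eq (log_im z).symm) ((log_im z).trans_le hz.2)
    · refine ((hgrowth.comp_tendsto hmaps.tendsto).mono inf_le_right).trans
        (.of_norm_le fun w ↦ ?_)
      rw [Function.comp_apply, Real.norm_eq_abs, Real.abs_exp, Complex.norm_exp, ← Real.exp_mul,
        mul_comm w.re]
      gcongr <;> exact le_abs_self _
    · rw [Function.comp_apply, ← re_add_im w, hw, ofReal_zero, zero_mul, add_zero, ← ofReal_exp]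
      exact hzero _ (Real.exp_pos _).le
    · rw [Function.comp_apply, ← re_add_im w, hw, Complex.exp_add, ← ofReal_exp]
      exact hangle _ (Real.exp_pos _).le
  rwa [Function.comp_apply, exp_log hz₀] at hbound

lemma re_ofReal_sub_ofReal_mul_I_mul (b N : ℝ) (w : ℂ) :
    (((b : ℂ) - N * Complex.I) * w).re = b * w.re + N * w.im := by
  simp

lemma re_mul_sq_polar (b N r θ : ℝ) :
    (((b : ℂ) - N * Complex.I) * (r * Complex.exp (θ * Complex.I)) ^ 2).re =
      r ^ 2 * (b * Real.cos (2 * θ) + N * Real.sin (2 * θ)) := by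
  have hsq : (r * Complex.exp (θ * Complex.I)) ^ 2 =
      ((r ^ 2 : ℝ) : ℂ) * Complex.exp ((2 * θ : ℝ) * Complex.I) := by
    rw [mul_pow, ← Complex.exp_nat_mul]
    push_cast
    ring_nf
  rw [hsq, re_ofReal_sub_ofReal_mul_I_mul, re_ofReal_mul, im_ofReal_mul, exp_ofReal_mul_I_re,
    exp_ofReal_mul_I_im]
  ring

lemma exists_angle_exponent_neg {s b φ : ℝ} (hsb : s < b) (N : ℝ) (hφ : φ < π / 2) :
    ∃ θ ∈ Ioo φ (π / 2),
      s * Real.sin θ ^ 2 + (b * Real.cos (2 * θ) + N * Real.sin (2 * θ)) < 0 := by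
  have hcont : Continuous fun θ : ℝ ↦
      s * Real.sin θ ^ 2 + (b * Real.cos (2 * θ) + N * Real.sin (2 * θ)) := by fun_prop
  -- at `θ = π / 2` the left-hand side is `s - b`
  have hneg : ∀ᶠ θ in 𝓝 (π / 2),
      s * Real.sin θ ^ 2 + (b * Real.cos (2 * θ) + N * Real.sin (2 * θ)) < 0 :=
    hcont.continuousAt.eventually_lt continuousAt_const
      (by simpa [mul_div_cancel₀ π (two_ne_zero' ℝ)] using hsb)
  have hmem : ∀ᶠ θ in 𝓝[<] (π / 2), θ ∈ Ioo φ (π / 2) := Ioo_mem_nhdsLT hφ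
  exact (hmem.and (hneg.filter_mono nhdsWithin_le_nhds)).exists

variable {F : ℂ → E} {M s b : ℝ}

lemma isBigO_exp_mul_sq_smul {l : Filter ℂ}
    (hgrowth : F =O[l] fun z ↦ Real.exp (s * z.im ^ 2)) (ζ : ℂ) :
    (fun z ↦ Complex.exp (ζ * z ^ 2) • F z) =O[l] fun z ↦ Real.exp ((‖ζ‖ + |s|) * ‖z‖ ^ 2) := by
  have hkernel : (fun z ↦ Complex.exp (ζ * z ^ 2)) =O[l] fun z ↦ Real.exp (‖ζ‖ * ‖z‖ ^ 2) :=
    .of_norm_le fun z ↦ by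
      rw [Complex.norm_exp, Real.exp_le_exp, ← norm_pow, ← norm_mul]
      exact re_le_norm _
  have hF_growth : F =O[l] fun z ↦ Real.exp (|s| * ‖z‖ ^ 2) :=
    hgrowth.trans <| .of_norm_le fun z ↦ by
      rw [Real.norm_eq_abs, Real.abs_exp, ← sq_abs z.im]
      gcongr
      · exact le_abs_self s
      · exact abs_im_le_norm z
  simpa only [add_mul, Real.exp_add, smul_eq_mul] using hkernel.smul hF_growth

lemma norm_exp_mul_sq_smul_le_on_ray {N θ : ℝ}
    (hgrowth : ∀ z : ℂ, ‖F z‖ ≤ M * Real.exp (s * z.im ^ 2))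
    (hθ : s * Real.sin θ ^ 2 + (b * Real.cos (2 * θ) + N * Real.sin (2 * θ)) ≤ 0) (r : ℝ) :
    ‖Complex.exp ((b - N * Complex.I) * (r * Complex.exp (θ * Complex.I)) ^ 2) •
      F (r * Complex.exp (θ * Complex.I))‖ ≤ M := by
  have hM : 0 ≤ M := by simpa using (norm_nonneg _).trans (hgrowth 0)
  set w : ℂ := r * Complex.exp (θ * Complex.I)
  have him : w.im = r * Real.sin θ := by rw [im_ofReal_mul, exp_ofReal_mul_I_im]
  calc ‖Complex.exp ((b - N * Complex.I) * w ^ 2) • F w‖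
      ≤ Real.exp (r ^ 2 * (b * Real.cos (2 * θ) + N * Real.sin (2 * θ))) *
          (M * Real.exp (s * (r * Real.sin θ) ^ 2)) := by
        rw [norm_smul, Complex.norm_exp, re_mul_sq_polar, ← him]
        gcongr
        exact hgrowth w
    _ = M * Real.exp (r ^ 2 *
          (s * Real.sin θ ^ 2 + (b * Real.cos (2 * θ) + N * Real.sin (2 * θ)))) := by
        rw [mul_left_comm, ← Real.exp_add]
        ring_nf
    _ ≤ M := mul_le_of_le_one_right hM
        (Real.exp_le_one_iff.2 (mul_nonpos_of_nonneg_of_nonpos (sq_nonneg r) hθ))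

lemma norm_exp_mul_sq_smul_le (hF : Differentiable ℂ F) (hsb : s < b)
    (hgrowth : ∀ z : ℂ, ‖F z‖ ≤ M * Real.exp (s * z.im ^ 2))
    (hreal : ∀ x : ℝ, 0 ≤ x → ‖F x‖ ≤ M * Real.exp (-b * x ^ 2)) (N : ℝ) {z : ℂ}
    (hz : arg z ∈ Ico 0 (π / 2)) :
    ‖Complex.exp ((b - N * Complex.I) * z ^ 2) • F z‖ ≤ M := by
  obtain ⟨θ, ⟨hθz, hθ⟩, hneg⟩ := exists_angle_exponent_neg hsb N hz.2
  have hθ₀ : 0 < θ := hz.1.trans_lt hθz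
  refine norm_le_on_sector (F := fun z ↦ Complex.exp ((b - N * Complex.I) * z ^ 2) • F z)
    (B := ‖(b : ℂ) - N * Complex.I‖ + |s|) (c := 2) (by linarith [pi_pos])
    (Differentiable.diffContOnCl (by fun_prop)) zero_le_two (by rw [lt_div_iff₀ hθ₀]; linarith)
    ?_ (fun r hr ↦ ?_) (fun r _ ↦ ?_) ⟨hz.1, hθz.le⟩
  · simp only [Real.rpow_two]
    exact isBigO_exp_mul_sq_smul (.of_bound M (.of_forall fun w ↦ by simpa using hgrowth w)) _
  · have hre : (((b : ℂ) - N * Complex.I) * (r : ℂ) ^ 2).re = b * r ^ 2 := by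
      simpa [mul_comm] using re_mul_sq_polar b N r 0
    calc ‖Complex.exp ((b - N * Complex.I) * r ^ 2) • F r‖
        ≤ Real.exp (b * r ^ 2) * (M * Real.exp (-b * r ^ 2)) := by
          rw [norm_smul, Complex.norm_exp, hre]
          gcongr
          exact hreal r hr
      _ = M := by
          rw [mul_left_comm, ← Real.exp_add]
          simp
  · exact norm_exp_mul_sq_smul_le_on_ray hgrowth hneg.le r

lemma eq_zero_of_re_pos_of_im_pos (hF : Differentiable ℂ F) (hsb : s < b)
    (hgrowth : ∀ z : ℂ, ‖F z‖ ≤ M * Real.exp (s * z.im ^ 2))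
    (hreal : ∀ x : ℝ, 0 ≤ x → ‖F x‖ ≤ M * Real.exp (-b * x ^ 2)) {z : ℂ}
    (hre : 0 < z.re) (him : 0 < z.im) : F z = 0 := by
  have harg : arg z ∈ Ico 0 (π / 2) :=
    ⟨arg_nonneg_iff.2 him.le, arg_lt_pi_div_two_iff.2 (.inl hre)⟩
  have hbound (N : ℝ) : ‖F z‖ ≤ M * Real.exp (-(b * (z ^ 2).re + N * (z ^ 2).im)) := by
    have h := norm_exp_mul_sq_smul_le hF hsb hgrowth hreal N harg
    rwa [norm_smul, Complex.norm_exp, re_ofReal_sub_ofReal_mul_I_mul,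
      ← le_div_iff₀' (Real.exp_pos _), div_eq_mul_inv, ← Real.exp_neg] at h
  have hsq_im : 0 < (z ^ 2).im := by
    rw [sq, mul_im]
    positivity
  have hexponent : Tendsto (fun N : ℝ ↦ b * (z ^ 2).re + N * (z ^ 2).im) atTop atTop :=
    tendsto_atTop_add_const_left _ _ (tendsto_id.atTop_mul_const hsq_im)
  have hlim : Tendsto (fun N : ℝ ↦ M * Real.exp (-(b * (z ^ 2).re + N * (z ^ 2).im))) atTop
      (𝓝 0) := by
    simpa using (Real.tendsto_exp_neg_atTop_nhds_zero.comp hexponent).const_mul M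
  exact norm_le_zero_iff.1 (ge_of_tendsto' hlim hbound)

lemma isBigO_principal_Ici_of_atTop {α G H : Type*} [LinearOrder α] [TopologicalSpace α]
    [CompactIccSpace α] [NormedAddCommGroup G] [NormedAddCommGroup H] {f : α → G} {g : α → H}
    {x₀ : α} (hf : ContinuousOn f (Ici x₀)) (hg : ContinuousOn g (Ici x₀))
    (hg₀ : ∀ x ∈ Ici x₀, g x ≠ 0) (h : f =O[atTop] g) : f =O[𝓟 (Ici x₀)] g := by
  have : Nonempty α := ⟨x₀⟩
  obtain ⟨C, hC⟩ := h.bound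
  obtain ⟨x₁, hx₁⟩ := eventually_atTop.1 hC
  have htail : f =O[𝓟 (Ici x₁)] g := isBigO_principal.2 ⟨C, hx₁⟩
  have hcompact : f =O[𝓟 (Icc x₀ x₁)] g :=
    ((hf.mono Icc_subset_Ici_self).isBigO_principal isCompact_Icc (c := (1 : ℝ)) (by simp)).trans
      ((hg.mono Icc_subset_Ici_self).isBigO_rev_principal isCompact_Icc
        (fun x hx ↦ hg₀ x hx.1) 1)
  refine (hcompact.sup htail).mono ?_
  rw [sup_principal, principal_mono]
  exact fun x hx ↦ (le_total x x₁).imp (⟨hx, ·⟩) id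

theorem eq_zero_of_isBigO_exp_im_sq [CompleteSpace E] (hF : Differentiable ℂ F) (hsb : s < b)
    (hgrowth : F =O[⊤] fun z ↦ Real.exp (s * z.im ^ 2))
    (hreal : (fun x : ℝ ↦ F x) =O[atTop] fun x : ℝ ↦ Real.exp (-b * x ^ 2)) : F = 0 := by
  obtain ⟨M₁, hM₁⟩ := isBigO_top.1 hgrowth
  obtain ⟨M₂, hM₂⟩ := isBigO_principal.1 <| isBigO_principal_Ici_of_atTop (x₀ := 0)
    (hF.continuous.comp continuous_ofReal).continuousOn (by fun_prop)
    (fun x _ ↦ (Real.exp_pos _).ne') hreal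
  simp only [Real.norm_eq_abs, Real.abs_exp] at hM₁ hM₂
  have hquadrant (z : ℂ) (hz : 0 < z.re ∧ 0 < z.im) : F z = 0 :=
    eq_zero_of_re_pos_of_im_pos (M := max M₁ M₂) hF hsb
      (fun w ↦ (hM₁ w).trans (by gcongr; exact le_max_left _ _))
      (fun x hx ↦ (hM₂ x hx).trans (by gcongr; exact le_max_right _ _)) hz.1 hz.2
  have hopen : IsOpen {z : ℂ | 0 < z.re ∧ 0 < z.im} :=
    (isOpen_lt continuous_const continuous_re).inter (isOpen_lt continuous_const continuous_im)
  have hF_an : AnalyticOnNhd ℂ F univ := hF.differentiableOn.analyticOnNhd isOpen_univ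
  exact hF_an.eq_of_eventuallyEq analyticOnNhd_const
    (eventually_of_mem (hopen.mem_nhds (x := 1 + Complex.I) (by simp)) hquadrant)

end PhragmenLindelof

theorem ae_eq_zero_of_fourier_eq_zero [CompleteSpace E] {V : Type*} [NormedAddCommGroup V]
    [InnerProductSpace ℝ V] [FiniteDimensional ℝ V] [MeasurableSpace V] [BorelSpace V]
    {f : V → E} (hf : Integrable f) (h : 𝓕 f = 0) : f =ᵐ[volume] 0 := by
  refine ae_eq_zero_of_integral_contDiff_smul_eq_zero hf.locallyIntegrable fun g hg hgc ↦ ?_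
  let G : SchwartzMap V ℂ := HasCompactSupport.toSchwartzMap (f := fun x ↦ (g x : ℂ))
    (hgc.comp_left ofReal_zero) (ofRealCLM.contDiff.comp hg)
  have hG (x : V) : 𝓕 ((𝓕⁻ G : SchwartzMap V ℂ) : V → ℂ) x = g x := by
    rw [← SchwartzMap.fourier_coe, FourierTransform.fourier_fourierInv_eq]
    rfl
  have hflip : ∫ x, 𝓕 ((𝓕⁻ G : SchwartzMap V ℂ) : V → ℂ) x • f x =
      ∫ ξ, (𝓕⁻ G : SchwartzMap V ℂ) ξ • 𝓕 f ξ := by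
    simpa using! VectorFourier.integral_fourierIntegral_smul_eq_flip (L := innerₗ V)
      Real.continuous_fourierChar continuous_inner (𝓕⁻ G : SchwartzMap V ℂ).integrable hf
  simpa [h, hG] using hflip

theorem hardy_strict_general [CompleteSpace E] {f : ℝ → E} {a b : ℝ}
    (hf : AEStronglyMeasurable f) (ha : 0 < a) (hab : 1 / 4 < a * b)
    (hdecay : f =O[ae volume] fun x ↦ Real.exp (-a * x ^ 2))
    (hhat : (fun y : ℝ ↦ (((2 * π) ^ (-(1 : ℝ) / 2) : ℝ) : ℂ) •
      ∫ x : ℝ, Complex.exp (-Complex.I * x * y) • f x) =O[atTop] fun y ↦ Real.exp (-b * y ^ 2)) :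
    f =ᵐ[volume] 0 := by
  have hmoments := integrable_exp_mul_smul_of_isBigO hf ha hdecay
  have hab' : 1 / (4 * a) < b := by
    rw [div_lt_iff₀ (by positivity)]
    linarith
  have hconst : (((2 * π) ^ (-(1 : ℝ) / 2) : ℝ) : ℂ) ≠ 0 :=
    ofReal_ne_zero.2 (by positivity)
  have hreal : (fun y : ℝ ↦ fourierLaplace f y) =O[atTop] fun y : ℝ ↦ Real.exp (-b * y ^ 2) :=
    (isBigO_const_smul_left hconst).1 hhat
  have hzero : fourierLaplace f = 0 := eq_zero_of_isBigO_exp_im_sq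
    (differentiable_fourierLaplace hmoments) hab' (isBigO_fourierLaplace ha hdecay) hreal
  refine ae_eq_zero_of_fourier_eq_zero (by simpa using hmoments 0) (funext fun y ↦ ?_)
  rw [fourier_eq_fourierLaplace, hzero, Pi.zero_apply, Pi.zero_apply]

/-- Hardy's theorem, strict case: if `|f(x)| ≤ C e^{-ax²}` and `|f̂(y)| ≤ C e^{-by²}`
with `ab > 1/4`, then `f = 0` almost everywhere. -/
theorem hardy_strict (f : ℝ → ℂ) (hf : Measurable f)
    (a b C : ℝ) (ha : 0 < a) (hb : 0 < b) (hC : 0 < C)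
    (hab : 1 / 4 < a * b)
    (hdecay : ∀ x : ℝ, ‖f x‖ ≤ C * Real.exp (-a * x ^ 2))
    (hhat : ∀ y : ℝ,
      ‖(((2 * π) ^ (-(1 : ℝ) / 2) : ℝ) : ℂ) *
        ∫ x : ℝ, f x * Complex.exp (-Complex.I * x * y)‖ ≤ C * Real.exp (-b * y ^ 2)) :
    f =ᵐ[volume] 0 := by
  refine hardy_strict_general hf.aestronglyMeasurable ha hab
    (.of_bound C (.of_forall fun x ↦ ?_)) (.of_bound C (.of_forall fun y ↦ ?_))
  · simpa using hdecay x
  · simpa [mul_comm] using hhat y
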